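/- arXiv:2103.08858 — 2 statements merged into one kernel-verified Lean document; each statement's English description precedes it below -/
import Mathlib

section
/- For any finite field 𝔽_q of odd characteristic, any multiplicative characters A₁,…,Aₙ, B₂,…,Bₙ of 𝔽_q^×, and any t ∈ 𝔽_q with t ≠ 0, one has ₙℙₙ₋₁(A₁,A₂,…,Aₙ; B₂,…,Bₙ; 1/t; q) = A₁(−t)·(∏_{i=2}^{n} (AᵢBᵢ)(−1))·ₙℙₙ₋₁(A₁, A₁B̄₂,…,A₁B̄ₙ; A₁Ā₂,…,A₁Āₙ; t; q), and this also equals A₂(t)·(∏_{i=3}^{n} (AᵢBᵢ)(−1))·ₙℙₙ₋₁(A₂B̄₂, A₂, A₂B̄₃,…,A₂B̄ₙ; A₂Ā₁, A₂Ā₃,…,A₂Āₙ; t; q). -/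
/-- Auxiliary to `periodP`: peels off the *first* pair of the list. -/
noncomputable def periodPAux {F : Type*} [Field F] [Fintype F]
    (A₁ : MulChar F ℂ) : List (MulChar F ℂ × MulChar F ℂ) → F → ℂ
  | [], lam => A₁⁻¹ (1 - lam)
  | p :: rest, lam => ∑ x : F, p.1 x * (p.1⁻¹ * p.2) (1 - x) * periodPAux A₁ rest (lam * x)

/-- `periodP A₁ [(A₂,B₂),…,(Aₙ₊₁,Bₙ₊₁)] λ` is the finite-field period function
`ₙ₊₁ℙₙ(A₁,…,Aₙ₊₁; B₂,…,Bₙ₊₁; λ; q)`: it is defined inductively by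
`₁ℙ₀(A₁;λ) = A₁⁻¹(1-λ)` and
`ₙ₊₁ℙₙ(A₁,…,Aₙ₊₁;B₂,…,Bₙ₊₁;λ) = ∑ₓ Aₙ₊₁(x)·(Aₙ₊₁⁻¹Bₙ₊₁)(1-x)·ₙℙₙ₋₁(A₁,…,Aₙ;B₂,…,Bₙ;λx)`,
the sum being over `x ∈ 𝔽_q`.  (Multiplicative characters are extended by `A(0)=0`,
which is automatic for `MulChar`.) -/
noncomputable def periodP {F : Type*} [Field F] [Fintype F]
    (A₁ : MulChar F ℂ) (l : List (MulChar F ℂ × MulChar F ℂ)) (lam : F) : ℂ :=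
  periodPAux A₁ l.reverse lam

/-- The complex-valued quadratic character `φ` of a finite field. -/
noncomputable def quadChar (F : Type*) [Field F] [Fintype F] [DecidableEq F] : MulChar F ℂ :=
  (quadraticChar F).ringHomComp (Int.castRingHom ℂ)

/-!
Replacing `x` by `1 / x` in the sum that builds `ₙ₊₁ℙₙ` from `ₙℙₙ₋₁` turns `f (x / t)` into
`f (1 / (t * x))`, while `1 - 1 / x = -(1 - x) / x` redistributes the characters. Hence a relation
`f (1 / t) = c * C t * g t` is inherited by each summation, with `(A, B)` becoming `(C B̄, C Ā)` and
the constant picking up the sign `(A * B) (-1)`. The two formulas differ only in the relation with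
which the recursion starts: that of `₁ℙ₀` with `C = A₁`, and that of `₂ℙ₁` with `C = A₂`, which is
the substitution `x ↦ t * x`.
-/

section Inversion

variable {F R : Type*} [Field F]

lemma mulChar_inv_apply_neg_one [CommMonoidWithZero R] (χ : MulChar F R) :
    χ⁻¹ (-1) = χ (-1) := by
  rw [MulChar.inv_apply', inv_neg_one]

lemma mulChar_one_sub_inv [CommMonoidWithZero R] (χ : MulChar F R) {x : F} (hx : x ≠ 0) :
    χ (1 - x⁻¹) = χ (-1) * χ⁻¹ x * χ (1 - x) := by
  have factor : 1 - x⁻¹ = -1 * x⁻¹ * (1 - x) := by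
    field_simp
    ring
  rw [factor, map_mul, map_mul, MulChar.inv_apply']

/-- The finite-field Euler transform of `f` with parameters `A`, `B`, an analogue of
`∫ x ^ (a - 1) * (1 - x) ^ (b - a - 1) * f (λ * x) dx`. It is the operation which raises the order
of a period function by one. -/
noncomputable def eulerTransform [Fintype F] [CommSemiring R] (A B : MulChar F R) (f : F → R)
    (lam : F) : R :=
  ∑ x : F, A x * (A⁻¹ * B) (1 - x) * f (lam * x)

/-- `InversionRelated C c f g` is the functional equation `f (1 / t) = c * C t * g t`, which the
Euler transform preserves. The point `t = 0`, where `t⁻¹ = 0`, is left out. -/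
def InversionRelated [CommMonoidWithZero R] (C : MulChar F R) (c : R) (f g : F → R) : Prop :=
  ∀ t : F, t ≠ 0 → f t⁻¹ = c * C t * g t

lemma inversionRelated_inv_one_sub [CommMonoidWithZero R] (χ : MulChar F R) :
    InversionRelated χ (χ (-1)) (fun t ↦ χ⁻¹ (1 - t)) (fun t ↦ χ⁻¹ (1 - t)) := by
  intro t ht
  beta_reduce
  rw [mulChar_one_sub_inv χ⁻¹ ht, mulChar_inv_apply_neg_one, inv_inv]

variable [Fintype F] [CommSemiring R]

theorem InversionRelated.eulerTransform {C : MulChar F R} {c : R} {f g : F → R}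
    (h : InversionRelated C c f g) (A B : MulChar F R) :
    InversionRelated C ((A * B) (-1) * c) (eulerTransform A B f)
      (eulerTransform (C * B⁻¹) (C * A⁻¹) g) := by
  intro t ht
  have inv_mul_dual : (C * B⁻¹)⁻¹ * (C * A⁻¹) = A⁻¹ * B := by
    rw [mul_inv_rev, inv_inv, mul_assoc, inv_mul_cancel_left, mul_comm]
  have cancel : A⁻¹ * (A⁻¹ * B)⁻¹ = B⁻¹ := by
    rw [mul_inv_rev, inv_inv, mul_comm B⁻¹, inv_mul_cancel_left]
  simp only [_root_.eulerTransform, inv_mul_dual, Finset.mul_sum]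
  rw [← Equiv.sum_comp (Equiv.inv F)]
  refine Finset.sum_congr rfl fun x _ ↦ ?_
  rw [Equiv.inv_apply]
  obtain rfl | hx := eq_or_ne x 0
  · simp only [inv_zero, MulChar.map_zero, zero_mul, mul_zero]
  calc A x⁻¹ * (A⁻¹ * B) (1 - x⁻¹) * f (t⁻¹ * x⁻¹)
      = A⁻¹ x * ((A * B) (-1) * (A⁻¹ * B)⁻¹ x * (A⁻¹ * B) (1 - x)) *
          (c * C (t * x) * g (t * x)) := by
        rw [← MulChar.inv_apply', mulChar_one_sub_inv _ hx, ← mul_inv,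
          h _ (mul_ne_zero ht hx), MulChar.mul_apply A⁻¹ B (-1), mulChar_inv_apply_neg_one,
          ← MulChar.mul_apply A B]
    _ = (A * B) (-1) * c * C t *
          (C x * (A⁻¹ * (A⁻¹ * B)⁻¹) x * (A⁻¹ * B) (1 - x) * g (t * x)) := by
        rw [map_mul, MulChar.mul_apply A⁻¹ (A⁻¹ * B)⁻¹]
        ring
    _ = (A * B) (-1) * c * C t * ((C * B⁻¹) x * (A⁻¹ * B) (1 - x) * g (t * x)) := by
        rw [cancel, MulChar.mul_apply C]

lemma inversionRelated_eulerTransform_inv_one_sub (χ A B : MulChar F R) :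
    InversionRelated A 1 (eulerTransform A B fun t ↦ χ⁻¹ (1 - t))
      (eulerTransform A (A * χ⁻¹) fun t ↦ (A * B⁻¹)⁻¹ (1 - t)) := by
  intro t ht
  have inv_mul_inv_char : (A * B⁻¹)⁻¹ = A⁻¹ * B := by rw [mul_inv, inv_inv]
  simp only [eulerTransform, inv_mul_inv_char, inv_mul_cancel_left, one_mul, Finset.mul_sum]
  rw [← Equiv.sum_comp (Equiv.mulLeft₀ t ht)]
  refine Finset.sum_congr rfl fun x _ ↦ ?_
  rw [Equiv.mulLeft₀_apply, inv_mul_cancel_left₀ ht, map_mul]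
  ring

end Inversion

section PeriodFunction

variable {F : Type*} [Field F] [Fintype F]

lemma periodP_nil (A : MulChar F ℂ) : periodP A [] = fun lam ↦ A⁻¹ (1 - lam) := by
  funext lam
  rw [periodP, List.reverse_nil, periodPAux]

lemma periodP_append_singleton (A : MulChar F ℂ) (l : List (MulChar F ℂ × MulChar F ℂ))
    (p : MulChar F ℂ × MulChar F ℂ) :
    periodP A (l ++ [p]) = eulerTransform p.1 p.2 (periodP A l) := by
  funext lam
  simp only [periodP, List.reverse_append, List.reverse_singleton, List.singleton_append,
    periodPAux, eulerTransform]

theorem InversionRelated.periodP_append {A D C : MulChar F ℂ} {c : ℂ}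
    {r s : List (MulChar F ℂ × MulChar F ℂ)}
    (h : InversionRelated C c (periodP A r) (periodP D s))
    (l : List (MulChar F ℂ × MulChar F ℂ)) :
    InversionRelated C ((l.map fun p ↦ (p.1 * p.2) (-1)).prod * c) (periodP A (r ++ l))
      (periodP D (s ++ l.map fun p ↦ (C * p.2⁻¹, C * p.1⁻¹))) := by
  induction l using List.reverseRecOn with
  | nil => simpa only [List.map_nil, List.prod_nil, one_mul, List.append_nil] using h
  | append_singleton l p ih =>
    rw [List.map_append, List.map_append, List.map_singleton, List.map_singleton,
      List.prod_append, List.prod_singleton, mul_comm (List.prod _), mul_assoc,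
      ← List.append_assoc, ← List.append_assoc, periodP_append_singleton,
      periodP_append_singleton]
    exact ih.eulerTransform p.1 p.2

theorem periodP_inv (A : MulChar F ℂ) (l : List (MulChar F ℂ × MulChar F ℂ)) {t : F}
    (ht : t ≠ 0) :
    periodP A l t⁻¹ = A (-t) * (l.map fun p ↦ (p.1 * p.2) (-1)).prod *
      periodP A (l.map fun p ↦ (A * p.2⁻¹, A * p.1⁻¹)) t := by
  have base : InversionRelated A (A (-1)) (periodP A []) (periodP A []) := by
    rw [periodP_nil]
    exact inversionRelated_inv_one_sub A
  have key := base.periodP_append l t ht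
  simp only [List.nil_append] at key
  rw [key, neg_eq_neg_one_mul t, map_mul]
  ring

theorem periodP_cons_inv (A₁ A₂ B₂ : MulChar F ℂ) (l : List (MulChar F ℂ × MulChar F ℂ))
    {t : F} (ht : t ≠ 0) :
    periodP A₁ ((A₂, B₂) :: l) t⁻¹ = A₂ t * (l.map fun p ↦ (p.1 * p.2) (-1)).prod *
      periodP (A₂ * B₂⁻¹)
        ((A₂, A₂ * A₁⁻¹) :: l.map fun p ↦ (A₂ * p.2⁻¹, A₂ * p.1⁻¹)) t := by
  have base : InversionRelated A₂ 1 (periodP A₁ [(A₂, B₂)])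
      (periodP (A₂ * B₂⁻¹) [(A₂, A₂ * A₁⁻¹)]) := by
    rw [← List.nil_append [(A₂, B₂)], ← List.nil_append [(A₂, A₂ * A₁⁻¹)],
      periodP_append_singleton, periodP_append_singleton, periodP_nil, periodP_nil]
    exact inversionRelated_eulerTransform_inv_one_sub A₁ A₂ B₂
  have key := base.periodP_append l t ht
  simp only [List.singleton_append, mul_one] at key
  rw [key, mul_comm (A₂ t)]

end PeriodFunction

theorem statement1_general {F : Type*} [Field F] [Fintype F]
    (m : ℕ) (A₁ A₂ B₂ : MulChar F ℂ) (A B : Fin m → MulChar F ℂ) (t : F) (ht : t ≠ 0) :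
    (periodP A₁ ((A₂, B₂) :: List.ofFn fun i => (A i, B i)) t⁻¹
        = A₁ (-t) * ((A₂ * B₂) (-1) * ∏ i, (A i * B i) (-1))
            * periodP A₁
                ((A₁ * B₂⁻¹, A₁ * A₂⁻¹) :: List.ofFn fun i => (A₁ * (B i)⁻¹, A₁ * (A i)⁻¹)) t)
    ∧ (periodP A₁ ((A₂, B₂) :: List.ofFn fun i => (A i, B i)) t⁻¹
        = A₂ t * (∏ i, (A i * B i) (-1))
            * periodP (A₂ * B₂⁻¹)
                ((A₂, A₂ * A₁⁻¹) :: List.ofFn fun i => (A₂ * (B i)⁻¹, A₂ * (A i)⁻¹)) t) := by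
  constructor
  · simpa only [List.map_cons, List.prod_cons, List.map_ofFn, List.prod_ofFn, Function.comp_def]
      using periodP_inv A₁ ((A₂, B₂) :: List.ofFn fun i ↦ (A i, B i)) ht
  · simpa only [List.map_ofFn, List.prod_ofFn, Function.comp_def]
      using periodP_cons_inv A₁ A₂ B₂ (List.ofFn fun i ↦ (A i, B i)) ht

/-- Kummer-type transformation for the period function `ₙℙₙ₋₁` (with `n = m + 2`):
the upper characters are `A₁, A₂, A 0, …, A (m-1)` (playing the roles of
`A₁, A₂, A₃, …, Aₙ`) and the lower ones are `B₂, B 0, …, B (m-1)`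
(playing the roles of `B₂, B₃, …, Bₙ`). -/
theorem statement1 {F : Type*} [Field F] [Fintype F] (hodd : ringChar F ≠ 2)
    (m : ℕ) (A₁ A₂ B₂ : MulChar F ℂ) (A B : Fin m → MulChar F ℂ) (t : F) (ht : t ≠ 0) :
    (periodP A₁ ((A₂, B₂) :: List.ofFn fun i => (A i, B i)) t⁻¹
        = A₁ (-t) * ((A₂ * B₂) (-1) * ∏ i, (A i * B i) (-1))
            * periodP A₁
                ((A₁ * B₂⁻¹, A₁ * A₂⁻¹) :: List.ofFn fun i => (A₁ * (B i)⁻¹, A₁ * (A i)⁻¹)) t)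
    ∧ (periodP A₁ ((A₂, B₂) :: List.ofFn fun i => (A i, B i)) t⁻¹
        = A₂ t * (∏ i, (A i * B i) (-1))
            * periodP (A₂ * B₂⁻¹)
                ((A₂, A₂ * A₁⁻¹) :: List.ofFn fun i => (A₂ * (B i)⁻¹, A₂ * (A i)⁻¹)) t) :=
  statement1_general m A₁ A₂ B₂ A B t ht
end

section
/- Let 𝔽_q be a finite field of odd characteristic and let η, S be multiplicative characters of 𝔽_q^× with η nontrivial and η = S². Then ₃ℙ₂(φ, η, η̄; ε, ε; 1; q) = J(S, φS̄)² + J(S̄, φS)². -/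
/-!
Substituting `x = u/(1 + u)` and collecting terms according to the argument of the leading
character writes `₃ℙ₂(φ,η,η⁻¹;1,1;1)` as `∑ η(w) Q(w)`, and the square of a Jacobi sum `J(A,B)` with
`AB = φ` as `∑ A(c) L(c)`, where `Q(w)` and `L(c)` are the quadratic character sums of
`u(u + 1)(u + w)(u + 1 + w)` and `s(s + 1)(s + c)`. The second identity, applied to `A = S` and to
`A = φS`, turns the right hand side into `∑ (1 + φ(c)) S(c) L(c) = ∑ S²(w) L(w²)`.

The quartic equals `y(y + w)` with `y = u² + (1 + w)u`. Counting the preimages of `y` gives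
`Q(w) = ∑ (1 + φ((1 + w)² + 4y)) φ(y(y + w))`. For `w ≠ 0` the first part of this sum is `-1` and
the second is `L(w²)`, as one sees by grouping the `s` in `L(w²)` by the value of
`(s + 1)(s + w²)/s`. The constant `-1` disappears against the nontrivial character `η = S²`.
-/

section Substitution

theorem one_sub_inv_one_add {K : Type*} [Field K] {u : K} (hu : 1 + u ≠ 0) :
    1 - (1 + u)⁻¹ = u * (1 + u)⁻¹ := by
  field_simp
  ring

-- The junk value `0⁻¹ = 0` pairs `u = -1` with `x = 1`, so no point has to be excluded.
theorem sum_one_sub_inv_one_add {K M : Type*} [DivisionRing K] [Fintype K] [AddCommMonoid M]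
    (f : K → M) : ∑ u, f (1 - (1 + u)⁻¹) = ∑ x, f x :=
  Equiv.sum_comp (((Equiv.addLeft 1).trans (Equiv.inv K)).trans (Equiv.subLeft 1)) f

theorem sum_sum_comp_mul_left {G M : Type*} [GroupWithZero G] [Fintype G] [AddCommMonoid M]
    (g : G → G → M) (hg : ∀ w, g 0 w = 0) :
    ∑ u, ∑ v, g u (u * v) = ∑ w, ∑ u, g u w := by
  rw [Finset.sum_comm (f := fun w u => g u w)]
  refine Finset.sum_congr rfl fun u _ => ?_
  rcases eq_or_ne u 0 with rfl | hu
  · simp [hg]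
  · exact Equiv.sum_comp (Equiv.mulLeft₀ u hu) (g u)

end Substitution

section CharacterValues

variable {G R : Type*} [CommGroupWithZero G] [CommMonoidWithZero R]

theorem mulChar_apply_mul_inv_apply (χ : MulChar G R) {a : G} (ha : a ≠ 0) :
    χ a * χ⁻¹ a = 1 := by
  rw [MulChar.inv_apply', ← map_mul, mul_inv_cancel₀ ha, map_one]

theorem mulChar_inv_apply_inv (χ : MulChar G R) (a : G) : χ⁻¹ a⁻¹ = χ a := by
  rw [MulChar.inv_apply', inv_inv]

end CharacterValues

section JacobiSum

variable {F R : Type*} [Field F] [Fintype F] [CommRing R]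

theorem jacobiSum_eq_sum_mul_inv_one_add (A B : MulChar F R) :
    jacobiSum A B = ∑ u, A u * (A * B)⁻¹ (1 + u) := by
  rw [jacobiSum, ← sum_one_sub_inv_one_add]
  refine Finset.sum_congr rfl fun u _ => ?_
  rcases eq_or_ne (1 + u) 0 with hu | hu
  · simp [hu, MulChar.map_zero]
  · rw [sub_sub_cancel, one_sub_inv_one_add hu, map_mul, MulChar.inv_apply', MulChar.mul_apply,
      mul_assoc]

theorem jacobiSum_mul_jacobiSum (A B C : MulChar F R) :
    jacobiSum A B * jacobiSum A C =
      ∑ w, A w * ∑ u, (A * C) u * (A * B)⁻¹ (u + 1) * (A * C)⁻¹ (u + w) := by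
  rw [jacobiSum_eq_sum_mul_inv_one_add A B, jacobiSum_eq_sum_mul_inv_one_add A C,
    Finset.sum_mul_sum]
  simp only [Finset.mul_sum]
  refine Eq.trans ?_ (sum_sum_comp_mul_left _ fun w => by simp [MulChar.map_zero])
  refine Finset.sum_congr rfl fun u _ => Finset.sum_congr rfl fun v _ => ?_
  rcases eq_or_ne u 0 with rfl | hu
  · simp [MulChar.map_zero]
  · rw [show u + u * v = u * (1 + v) by ring, add_comm u 1, map_mul A, map_mul (A * C)⁻¹]
    linear_combination (-A u * A v * (A * B)⁻¹ (1 + u) * (A * C)⁻¹ (1 + v)) *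
      mulChar_apply_mul_inv_apply (A * C) hu

end JacobiSum

section PeriodFunction

variable {F : Type*} [Field F] [Fintype F]

theorem periodP_concat_one (α A : MulChar F ℂ) (l : List (MulChar F ℂ × MulChar F ℂ)) (lam : F) :
    periodP α (l ++ [(A, 1)]) lam =
      ∑ u, A u * (1 : MulChar F ℂ) (1 + u) * periodP α l (lam * (u * (1 + u)⁻¹)) := by
  simp only [periodP, List.reverse_append, List.reverse_singleton, List.singleton_append,
    periodPAux, mul_one]
  rw [← sum_one_sub_inv_one_add]
  refine Finset.sum_congr rfl fun u _ => ?_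
  rcases eq_or_ne (1 + u) 0 with hu | hu
  · simp [hu, MulChar.map_zero]
  · rw [sub_sub_cancel, one_sub_inv_one_add hu, map_mul, mulChar_inv_apply_inv, mul_assoc (A u),
      ← MulChar.inv_apply', mul_comm (A⁻¹ _), mulChar_apply_mul_inv_apply A hu,
      MulChar.one_apply hu.isUnit]

theorem periodP_singleton (α A : MulChar F ℂ) (lam : F) :
    periodP α [(A, 1)] lam = ∑ v, A v * α (1 + v) * α⁻¹ (1 + v - lam * v) := by
  rw [← List.nil_append [(A, 1)], periodP_concat_one]
  refine Finset.sum_congr rfl fun v _ => ?_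
  rcases eq_or_ne (1 + v) 0 with hv | hv
  · simp [hv, MulChar.map_zero]
  · have hx : 1 - lam * (v * (1 + v)⁻¹) = (1 + v)⁻¹ * (1 + v - lam * v) := by field_simp
    rw [MulChar.one_apply hv.isUnit, mul_one, periodP, List.reverse_nil, periodPAux, hx, map_mul,
      mulChar_inv_apply_inv, mul_assoc]

theorem periodP_pair_one_eq_sum_sum (α A B : MulChar F ℂ) :
    periodP α [(A, 1), (B, 1)] 1 =
      ∑ u, ∑ v, B u * A v * α (1 + u) * α (1 + v) * α⁻¹ (1 + u + v) := by
  rw [← List.singleton_append, periodP_concat_one]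
  refine Finset.sum_congr rfl fun u _ => ?_
  rcases eq_or_ne (1 + u) 0 with hu | hu
  · simp [hu, MulChar.map_zero]
  · rw [MulChar.one_apply hu.isUnit, mul_one, periodP_singleton, Finset.mul_sum]
    refine Finset.sum_congr rfl fun v _ => ?_
    have hx : 1 + v - 1 * (u * (1 + u)⁻¹) * v = (1 + u)⁻¹ * (1 + u + v) := by field_simp; ring
    rw [hx, map_mul, mulChar_inv_apply_inv]
    ring

theorem periodP_pair_one (α A B : MulChar F ℂ) :
    periodP α [(A, 1), (B, 1)] 1 =
      ∑ w, A w * ∑ u, (α * A * B)⁻¹ u * α (u + 1) * α (u + w) * α⁻¹ (u + 1 + w) := by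
  rw [periodP_pair_one_eq_sum_sum, ← Equiv.sum_comp (Equiv.inv F)]
  simp only [Finset.mul_sum]
  refine Eq.trans ?_ (sum_sum_comp_mul_left _ fun w => by simp [MulChar.map_zero])
  refine Finset.sum_congr rfl fun u _ => Finset.sum_congr rfl fun v _ => ?_
  rcases eq_or_ne u 0 with rfl | hu
  · simp [MulChar.map_zero]
  · have hadd : 1 + u⁻¹ = u⁻¹ * (u + 1) := by field_simp
    have hadd_add : 1 + u⁻¹ + v = u⁻¹ * (u + 1 + u * v) := by field_simp
    rw [Equiv.inv_apply, hadd_add, hadd, show u + u * v = u * (1 + v) by ring]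
    simp only [map_mul, mul_inv, MulChar.mul_apply, ← MulChar.inv_apply', inv_inv]
    linear_combination (-(B⁻¹ u * A v * α⁻¹ u * α (u + 1) * α u * α (1 + v) *
      α⁻¹ (u + 1 + u * v))) * mulChar_apply_mul_inv_apply A hu

end PeriodFunction

section QuadraticSums

variable {F : Type*} [Field F] [Fintype F] [DecidableEq F]

/-- The character sum of the Legendre family `y² = s(s + 1)(s + c)`: in odd characteristic
the affine curve has `q + legendreSum c` points over the field with `q` elements. -/
def legendreSum (c : F) : ℤ :=
  ∑ s : F, quadraticChar F (s * (s + 1) * (s + c))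

/-- The character sum of the quartics `y² = u(u + 1)(u + w)(u + 1 + w)`, which are symmetric under
`u ↦ -(1 + w) - u`. Their sum over `w` with weights `η(w)` is `₃ℙ₂(φ,η,η⁻¹;1,1;1)`. -/
def quarticSum (w : F) : ℤ :=
  ∑ u : F, quadraticChar F (u * (u + 1) * (u + w) * (u + 1 + w))

theorem quadraticChar_sq_mul {a : F} (ha : a ≠ 0) (b : F) :
    quadraticChar F (a ^ 2 * b) = quadraticChar F b := by
  rw [map_mul, quadraticChar_sq_one' ha, one_mul]

theorem quadraticChar_card_quadratic_roots (hF : ringChar F ≠ 2) {a : F} (ha : a ≠ 0) (b c : F) :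
    (Finset.card {s : F | a * (s * s) + b * s + c = 0} : ℤ) =
      quadraticChar F (discrim a b c) + 1 := by
  have h2 : (2 : F) ≠ 0 := Ring.two_ne_zero hF
  have : NeZero (2 : F) := ⟨h2⟩
  rw [← quadraticChar_card_sqrts hF]
  refine congrArg _ (Finset.card_equiv
    ((Equiv.mulLeft₀ (2 * a) (mul_ne_zero h2 ha)).trans (Equiv.addRight b)) fun s => ?_)
  simp [quadratic_eq_zero_iff_discrim_eq_sq ha, eq_comm]

theorem sum_comp_sq_add_mul (hF : ringChar F ≠ 2) {M : Type*} [AddCommGroup M] (b : F) (g : F → M) :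
    ∑ s, g (s ^ 2 + b * s) = ∑ y, (quadraticChar F (b ^ 2 + 4 * y) + 1) • g y := by
  rw [← Finset.sum_fiberwise' Finset.univ (fun s => s ^ 2 + b * s) g]
  refine Finset.sum_congr rfl fun y _ => ?_
  have hfib : ∀ s : F, s ^ 2 + b * s = y ↔ 1 * (s * s) + b * s + -y = 0 := by grind
  have hdiscrim : discrim 1 b (-y) = b ^ 2 + 4 * y := by rw [discrim]; ring
  rw [Finset.sum_const, ← natCast_zsmul, Finset.filter_congr fun s _ => hfib s,
    quadraticChar_card_quadratic_roots hF one_ne_zero, hdiscrim]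

theorem sum_comp_sq (hF : ringChar F ≠ 2) {M : Type*} [AddCommGroup M] (g : F → M) :
    ∑ s, g (s ^ 2) = ∑ y, (quadraticChar F y + 1) • g y := by
  have h4 (y : F) : quadraticChar F (4 * y) = quadraticChar F y := by
    rw [← quadraticChar_sq_mul (Ring.two_ne_zero hF) y]
    norm_num
  simpa [h4] using sum_comp_sq_add_mul hF 0 g

theorem sum_quadraticChar_mul_add (hF : ringChar F ≠ 2) {w : F} (hw : w ≠ 0) :
    ∑ y, quadraticChar F (y * (y + w)) = -1 := by
  have hJ : jacobiSum (quadraticChar F) (quadraticChar F) = -quadraticChar F (-1) := by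
    simpa only [(quadraticChar_isQuadratic F).inv] using
      jacobiSum_nontrivial_inv (quadraticChar_ne_one hF)
  calc ∑ y, quadraticChar F (y * (y + w))
      = ∑ z, quadraticChar F (-1) * (quadraticChar F z * quadraticChar F (1 - z)) := by
        rw [← Equiv.sum_comp (Equiv.mulLeft₀ (-w) (neg_ne_zero.mpr hw))]
        refine Finset.sum_congr rfl fun z _ => ?_
        rw [Equiv.mulLeft₀_apply, show -w * z * (-w * z + w) = w ^ 2 * (-1 * (z * (1 - z))) by ring,
          quadraticChar_sq_mul hw, map_mul, map_mul]
    _ = -quadraticChar F (-1) ^ 2 := by rw [← Finset.mul_sum, ← jacobiSum, hJ]; ring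
    _ = -1 := by rw [quadraticChar_sq_one (neg_ne_zero.mpr one_ne_zero)]

-- The `s ≠ 0` with `(s + 1)(s + c) / s = x` are the roots of `s² + (1 + c - x)s + c`.
theorem legendreSum_eq_sum_discrim (hF : ringChar F ≠ 2) {c : F} (hc : c ≠ 0) :
    legendreSum c = ∑ x, quadraticChar F (x * ((x - 1 - c) ^ 2 - 4 * c)) := by
  have hroot (s x : F) (hs : s ≠ 0) :
      1 * (s * s) + (1 + c - x) * s + c = 0 ↔ (s + 1) * (s + c) * s⁻¹ = x := by
    rw [mul_inv_eq_iff_eq_mul₀ hs]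
    grind
  have hfib (s : F) : quadraticChar F (s * (s + 1) * (s + c)) =
      ∑ x with 1 * (s * s) + (1 + c - x) * s + c = 0, quadraticChar F x := by
    rcases eq_or_ne s 0 with rfl | hs
    · simp [hc]
    · have hsq : s * (s + 1) * (s + c) = s ^ 2 * ((s + 1) * (s + c) * s⁻¹) := by field_simp
      simp only [hroot s _ hs, Finset.filter_eq, Finset.mem_univ, if_true, Finset.sum_singleton]
      rw [hsq, quadraticChar_sq_mul hs]
  calc legendreSum c
      = ∑ x, ∑ s with 1 * (s * s) + (1 + c - x) * s + c = 0, quadraticChar F x := by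
        simp only [legendreSum, hfib, Finset.sum_filter]
        exact Finset.sum_comm
    _ = ∑ x, (quadraticChar F (discrim 1 (1 + c - x) c) + 1) * quadraticChar F x := by
        simp only [Finset.sum_const, nsmul_eq_mul,
          quadraticChar_card_quadratic_roots hF one_ne_zero]
    _ = ∑ x, quadraticChar F (x * ((x - 1 - c) ^ 2 - 4 * c)) := by
        simp only [add_mul, one_mul, Finset.sum_add_distrib, quadraticChar_sum_zero hF, add_zero]
        refine Finset.sum_congr rfl fun x _ => ?_
        rw [← map_mul, discrim]
        congr 1
        ring

theorem legendreSum_sq (hF : ringChar F ≠ 2) {w : F} (hw : w ≠ 0) :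
    legendreSum (w ^ 2) =
      ∑ y, quadraticChar F ((1 + w) ^ 2 + 4 * y) * quadraticChar F (y * (y + w)) := by
  have h4 : (4 : F) ≠ 0 := by
    rw [show (4 : F) = 2 * 2 by norm_num]
    exact mul_self_ne_zero.mpr (Ring.two_ne_zero hF)
  rw [legendreSum_eq_sum_discrim hF (pow_ne_zero 2 hw),
    ← Equiv.sum_comp ((Equiv.mulLeft₀ 4 h4).trans (Equiv.addLeft ((1 + w) ^ 2)))]
  refine Finset.sum_congr rfl fun y _ => ?_
  rw [← map_mul, ← quadraticChar_sq_mul h4 (((1 + w) ^ 2 + 4 * y) * (y * (y + w)))]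
  simp only [Equiv.trans_apply, Equiv.mulLeft₀_apply, Equiv.coe_addLeft]
  congr 1
  ring

theorem quarticSum_eq_legendreSum_sq_sub_one (hF : ringChar F ≠ 2) {w : F} (hw : w ≠ 0) :
    quarticSum w = legendreSum (w ^ 2) - 1 := by
  have hfactor (u : F) : u * (u + 1) * (u + w) * (u + 1 + w) =
      (u ^ 2 + (1 + w) * u) * (u ^ 2 + (1 + w) * u + w) := by ring
  simp only [quarticSum, hfactor]
  rw [sum_comp_sq_add_mul hF (1 + w) fun y => quadraticChar F (y * (y + w))]
  simp only [smul_eq_mul, add_mul, one_mul, Finset.sum_add_distrib]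
  rw [← legendreSum_sq hF hw, sum_quadraticChar_mul_add hF hw, sub_eq_add_neg]

end QuadraticSums

section QuadChar

variable {F : Type*} [Field F] [Fintype F] [DecidableEq F]

theorem quadChar_apply (a : F) : quadChar F a = (quadraticChar F a : ℂ) := rfl

theorem quadChar_isQuadratic : (quadChar F).IsQuadratic :=
  (quadraticChar_isQuadratic F).comp _

theorem periodP_quadChar_eq_sum_mul_quarticSum (η : MulChar F ℂ) :
    periodP (quadChar F) [(η, 1), (η⁻¹, 1)] 1 = ∑ w, η w * quarticSum w := by
  simp only [periodP_pair_one, mul_inv_cancel_right, quadChar_isQuadratic.inv, quarticSum,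
    Int.cast_sum, Int.cast_mul, quadChar_apply, map_mul]

theorem jacobiSum_sq_eq_sum_mul_legendreSum {A B : MulChar F ℂ} (hAB : A * B = quadChar F) :
    jacobiSum A B ^ 2 = ∑ c, A c * legendreSum c := by
  simp only [sq, jacobiSum_mul_jacobiSum, hAB, quadChar_isQuadratic.inv, legendreSum,
    Int.cast_sum, Int.cast_mul, quadChar_apply, map_mul]

theorem jacobiSum_sq_add_jacobiSum_sq (hF : ringChar F ≠ 2) (S : MulChar F ℂ) :
    jacobiSum S (quadChar F * S⁻¹) ^ 2 + jacobiSum S⁻¹ (quadChar F * S) ^ 2 =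
      ∑ w, (S ^ 2) w * legendreSum (w ^ 2) := by
  calc jacobiSum S (quadChar F * S⁻¹) ^ 2 + jacobiSum S⁻¹ (quadChar F * S) ^ 2
      = ∑ c, S c * legendreSum c + ∑ c, (quadChar F * S) c * legendreSum c := by
        rw [jacobiSum_comm S⁻¹, jacobiSum_sq_eq_sum_mul_legendreSum (mul_inv_cancel_right _ _),
          jacobiSum_sq_eq_sum_mul_legendreSum (mul_mul_inv_cancel'_right _ _)]
    _ = ∑ c, (quadraticChar F c + 1) • (S c * legendreSum c) := by
        rw [← Finset.sum_add_distrib]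
        refine Finset.sum_congr rfl fun c _ => ?_
        rw [MulChar.mul_apply, quadChar_apply, zsmul_eq_mul]
        push_cast
        ring
    _ = ∑ w, (S ^ 2) w * legendreSum (w ^ 2) := by
        rw [← sum_comp_sq hF fun c => S c * (legendreSum c : ℂ)]
        simp only [map_pow, MulChar.pow_apply' S two_ne_zero]

end QuadChar

/-- The special case `K = ε` of the finite-field Clausen evaluation:
`₃ℙ₂(φ,η,η̄;ε,ε;1) = J(S,φS̄)² + J(S̄,φS)²` when `η = S²`. -/
theorem statement4 {F : Type*} [Field F] [Fintype F] [DecidableEq F]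
    (hodd : ringChar F ≠ 2) (η S : MulChar F ℂ) (hη : η ≠ 1) (hS : η = S ^ 2) :
    periodP (quadChar F) [(η, 1), (η⁻¹, 1)] 1
      = jacobiSum S (quadChar F * S⁻¹) ^ 2 + jacobiSum S⁻¹ (quadChar F * S) ^ 2 := by
  have hterm (w : F) : η w * (quarticSum w : ℂ) = η w * legendreSum (w ^ 2) - η w := by
    rcases eq_or_ne w 0 with rfl | hw
    · simp [MulChar.map_zero]
    · rw [quarticSum_eq_legendreSum_sq_sub_one hodd hw]
      push_cast
      ring
  calc periodP (quadChar F) [(η, 1), (η⁻¹, 1)] 1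
      = ∑ w, η w * legendreSum (w ^ 2) - ∑ w, η w := by
        simp only [periodP_quadChar_eq_sum_mul_quarticSum, hterm, Finset.sum_sub_distrib]
    _ = ∑ w, (S ^ 2) w * legendreSum (w ^ 2) := by
        rw [MulChar.sum_eq_zero_of_ne_one hη, sub_zero, hS]
    _ = _ := (jacobiSum_sq_add_jacobiSum_sq hodd S).symm
end
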